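/- Let T > 0, let μ : ℝ³ → ℝ, let p : ℝ × ℝ³ → ℝ be continuously differentiable in the spatial variable, and let h : ℝ³ → ℝ be continuously differentiable. Suppose u : ℝ × ℝ³ → ℝ is twice continuously differentiable jointly in (t,x) and three times continuously differentiable in x on (0,T) × ℝ³ and solves the HJB equation ∂_t u − (1/2)|∇u|² + (1/2) Δu − p = 0 on (0,T) × ℝ³ with u(T,x) = h(x), and suppose ρ : ℝ × ℝ³ → ℝ is continuously differentiable in time and twice continuously differentiable in space and solves the Fokker–Planck equation ∂_t ρ − ∇·(ρ ∇u) = (1/2) Δρ on (0,T) × ℝ³ with ρ(0,x) = μ(x). Then the time-reversed pair ρ̃(t,x) := ρ(T−t,x), ṽ(t,x) := ∇u(T−t,x) solves the system (∂_t + ṽ·∇)ṽ = −∇p̃ + (1/2) Δṽ and ∂_t ρ̃ + ∇·(ρ̃ ṽ) + (1/2) Δρ̃ = 0 on (0,T) × ℝ³, with ṽ(0,x) = ∇h(x) and ρ̃(T,x) = μ(x), where p̃(t,x) := p(T−t,x). -/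

import Mathlib

open Set MeasureTheory

noncomputable section

/-- 3-dimensional Euclidean space. -/
abbrev E3 : Type := EuclideanSpace ℝ (Fin 3)

/-- Time partial derivative of a function on `ℝ × ℝ³`. -/
def dt1 (f : ℝ × E3 → ℝ) : ℝ × E3 → ℝ := fun p => deriv (fun s => f (s, p.2)) p.1

/-- Spatial partial derivative in the `i`-th coordinate direction. -/
def dx1 (i : Fin 3) (f : ℝ × E3 → ℝ) : ℝ × E3 → ℝ :=
  fun p => fderiv ℝ (fun y => f (p.1, y)) p.2 (EuclideanSpace.single i 1)

/-- Spatial Laplacian `Δf = ∑ i, ∂_i² f`. -/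
def lap1 (f : ℝ × E3 → ℝ) : ℝ × E3 → ℝ := fun p => ∑ i, dx1 i (dx1 i f) p

lemma aux_snd {E : Type*} [NormedAddCommGroup E] [NormedSpace ℝ E] {f : E → ℝ} {x : E}
    (hf : ContDiffAt ℝ 2 f x) (v w : E) :
    HasFDerivAt (fun y => fderiv ℝ f y v)
      ((ContinuousLinearMap.apply ℝ ℝ v).comp (fderiv ℝ (fderiv ℝ f) x)) x := by
  have h1 : DifferentiableAt ℝ (fderiv ℝ f) x :=
    (hf.fderiv_right (m := 1) (by norm_num)).differentiableAt (by norm_num)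
  exact (ContinuousLinearMap.apply ℝ ℝ v).hasFDerivAt.comp x h1.hasFDerivAt

lemma aux_symm {E : Type*} [NormedAddCommGroup E] [NormedSpace ℝ E] {f : E → ℝ} {x : E}
    (hf : ContDiffAt ℝ 2 f x) (v w : E) :
    fderiv ℝ (fderiv ℝ f) x v w = fderiv ℝ (fderiv ℝ f) x w v :=
  (hf.isSymmSndFDerivAt (by simp)).eq v w

lemma aux_comm {f : E3 → ℝ} (hf : ContDiff ℝ 2 f) (v w : E3) (x : E3) :
    fderiv ℝ (fun y => fderiv ℝ f y v) x w = fderiv ℝ (fun y => fderiv ℝ f y w) x v := by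
  rw [(aux_snd hf.contDiffAt v w).fderiv, (aux_snd hf.contDiffAt w v).fderiv]
  simpa using aux_symm hf.contDiffAt w v

lemma aux_D {f : E3 → ℝ} {n m : WithTop ℕ∞} (hf : ContDiff ℝ n f) (hm : m + 1 ≤ n) (v : E3) :
    ContDiff ℝ m (fun y => fderiv ℝ f y v) :=
  (hf.fderiv_right hm).clm_apply contDiff_const

lemma aux_mixed {u : ℝ × E3 → ℝ} {U : Set (ℝ × E3)} (hU : IsOpen U) (hu : ContDiffOn ℝ 2 u U)
    {s : ℝ} {x : E3} (hs : (s, x) ∈ U) (i : Fin 3) :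
    dt1 (dx1 i u) (s, x) = dx1 i (dt1 u) (s, x) := by
  have hat : ∀ q ∈ U, ContDiffAt ℝ 2 u q := fun q hq => hu.contDiffAt (hU.mem_nhds hq)
  have hdx : ∀ q ∈ U, dx1 i u q = fderiv ℝ u q (0, EuclideanSpace.single i 1) := by
    rintro ⟨a, y⟩ hq
    have h1 := ((hat _ hq).differentiableAt (by norm_num)).hasFDerivAt
    have h2 : HasFDerivAt (fun z : E3 => ((a, z) : ℝ × E3)) (ContinuousLinearMap.inr ℝ ℝ E3) y :=
      hasFDerivAt_prodMk_right a y
    have h3 := (h1.comp y h2).fderiv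
    simp only [dx1]
    erw [h3]
    simp
  have hdt : ∀ q ∈ U, dt1 u q = fderiv ℝ u q (1, 0) := by
    rintro ⟨a, y⟩ hq
    have h1 := ((hat _ hq).differentiableAt (by norm_num)).hasFDerivAt
    have h2 : HasFDerivAt (fun z : ℝ => ((z, y) : ℝ × E3)) (ContinuousLinearMap.inl ℝ ℝ E3) a :=
      hasFDerivAt_prodMk_left a y
    have h3 := (h1.comp a h2).hasDerivAt.deriv
    simp only [dt1]
    erw [h3]
    simp
  have e1 : dx1 i u =ᶠ[nhds (s, x)] fun q => fderiv ℝ u q (0, EuclideanSpace.single i 1) :=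
    Filter.eventuallyEq_of_mem (hU.mem_nhds hs) hdx
  have e2 : dt1 u =ᶠ[nhds (s, x)] fun q => fderiv ℝ u q (1, 0) :=
    Filter.eventuallyEq_of_mem (hU.mem_nhds hs) hdt
  have d1 := (aux_snd (hat _ hs) (0, EuclideanSpace.single i 1) 0).congr_of_eventuallyEq e1
  have d2 := (aux_snd (hat _ hs) (1, 0) 0).congr_of_eventuallyEq e2
  have h1 := (d1.comp s (hasFDerivAt_prodMk_left (𝕜 := ℝ) s x)).hasDerivAt.deriv
  have h2 := (d2.comp x (hasFDerivAt_prodMk_right (𝕜 := ℝ) s x)).fderiv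
  have g1 : dt1 (dx1 i u) (s, x) =
      fderiv ℝ (fderiv ℝ u) (s, x) (1, 0) (0, EuclideanSpace.single i 1) := by
    refine h1.trans ?_
    simp
  have g2 : dx1 i (dt1 u) (s, x) =
      fderiv ℝ (fderiv ℝ u) (s, x) (0, EuclideanSpace.single i 1) (1, 0) := by
    refine (congrArg (fun L => L (EuclideanSpace.single i 1)) h2).trans ?_
    simp
  rw [g1, g2, aux_symm (hat _ hs)]

lemma aux_time (F : ℝ × E3 → ℝ) (T t : ℝ) (x : E3) :
    dt1 (fun q => F (T - q.1, q.2)) (t, x) = - dt1 F (T - t, x) :=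
  deriv_comp_const_sub (f := fun r => F (r, x)) T t

lemma aux_main {f : E3 → ℝ} (hf : ContDiff ℝ 3 f) {g : E3 → ℝ} (hg : ContDiff ℝ 1 g)
    (e : Fin 3 → E3) (w : E3) (x : E3) :
    fderiv ℝ (fun y => (1/2) * (∑ j, (fderiv ℝ f y (e j))^2)
        - (1/2) * (∑ j, fderiv ℝ (fun z => fderiv ℝ f z (e j)) y (e j)) + g y) x w
      = (∑ j, fderiv ℝ f x (e j) * fderiv ℝ (fun y => fderiv ℝ f y w) x (e j))
        - (1/2) * (∑ j, fderiv ℝ (fun y => fderiv ℝ (fun z => fderiv ℝ f z w) y (e j)) x (e j))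
        + fderiv ℝ g x w := by
  have c1 : ∀ v, ContDiff ℝ 2 (fun y => fderiv ℝ f y v) := fun v => aux_D hf (by norm_num) v
  have c2 : ∀ v v', ContDiff ℝ 1 (fun y => fderiv ℝ (fun z => fderiv ℝ f z v) y v') :=
    fun v v' => aux_D (c1 v) (by norm_num) v'
  have hf2 : ContDiff ℝ 2 f := hf.of_le (by norm_num)
  have d1 : ∀ v, HasFDerivAt (fun y => fderiv ℝ f y v) (fderiv ℝ (fun y => fderiv ℝ f y v) x) x :=
    fun v => ((c1 v).differentiable (by norm_num) x).hasFDerivAt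
  have d2 : ∀ v v', HasFDerivAt (fun y => fderiv ℝ (fun z => fderiv ℝ f z v) y v')
      (fderiv ℝ (fun y => fderiv ℝ (fun z => fderiv ℝ f z v) y v') x) x :=
    fun v v' => ((c2 v v').differentiable (by norm_num) x).hasFDerivAt
  have dg := (hg.differentiable (by norm_num) x).hasFDerivAt
  have key := (((HasFDerivAt.fun_sum (u := Finset.univ) fun j _ => (d1 (e j)).pow 2).const_mul (1/2)).sub
    ((HasFDerivAt.fun_sum (u := Finset.univ) fun j _ => d2 (e j) (e j)).const_mul (1/2))).add dg
  refine (congrArg (fun L => L w) key.fderiv).trans ?_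
  have k1 : ∀ j, fderiv ℝ (fun y => fderiv ℝ f y w) x (e j)
      = fderiv ℝ (fun y => fderiv ℝ f y (e j)) x w := fun j => aux_comm hf2 _ _ _
  have k2 : ∀ j, fderiv ℝ (fun y => fderiv ℝ (fun z => fderiv ℝ f z w) y (e j)) x (e j)
      = fderiv ℝ (fun y => fderiv ℝ (fun z => fderiv ℝ f z (e j)) y (e j)) x w := by
    intro j
    rw [aux_comm (c1 (e j)) (e j) w x]
    congr 2
    funext y
    exact aux_comm hf2 _ _ _
  simp only [k1, k2]
  simp [Finset.mul_sum, Fin.sum_univ_three]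
  ring

/-- If `u` solves the HJB equation `∂_t u − (1/2)|∇u|² + (1/2)Δu − p = 0`, `u(T,·) = h`,
and `ρ` solves the Fokker–Planck equation `∂_t ρ − ∇·(ρ∇u) = (1/2)Δρ`, `ρ(0,·) = μ`,
then the time-reversed pair `ρ̃(t,x) = ρ(T−t,x)`, `ṽ(t,x) = ∇u(T−t,x)` solves the
Navier–Stokes-type system `(∂_t + ṽ·∇)ṽ = −∇p̃ + (1/2)Δṽ`,
`∂_t ρ̃ + ∇·(ρ̃ṽ) + (1/2)Δρ̃ = 0`, with `ṽ(0,·) = ∇h` and `ρ̃(T,·) = μ`. -/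
theorem stmt11 (T : ℝ) (hT : 0 < T)
    (μ : E3 → ℝ) (p : ℝ × E3 → ℝ) (h : E3 → ℝ)
    (hp : ∀ t : ℝ, ContDiff ℝ 1 (fun y => p (t, y)))
    (hh : ContDiff ℝ 1 h)
    (u : ℝ × E3 → ℝ)
    (hu2 : ContDiffOn ℝ 2 u (Ioo 0 T ×ˢ (univ : Set E3)))
    (hu3 : ∀ t ∈ Ioo (0:ℝ) T, ContDiff ℝ 3 (fun y => u (t, y)))
    (hHJB : ∀ t ∈ Ioo (0:ℝ) T, ∀ x : E3,
      dt1 u (t, x) - (1/2) * (∑ i, (dx1 i u (t, x))^2)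
        + (1/2) * lap1 u (t, x) - p (t, x) = 0)
    (huterm : ∀ x : E3, u (T, x) = h x)
    (ρ : ℝ × E3 → ℝ)
    (hρt : ∀ x : E3, ContDiffOn ℝ 1 (fun t => ρ (t, x)) (Ioo 0 T))
    (hρx : ∀ t ∈ Ioo (0:ℝ) T, ContDiff ℝ 2 (fun y => ρ (t, y)))
    (hFPK : ∀ t ∈ Ioo (0:ℝ) T, ∀ x : E3,
      dt1 ρ (t, x) - (∑ i, dx1 i (fun q => ρ q * dx1 i u q) (t, x))
        = (1/2) * lap1 ρ (t, x))
    (hρ0 : ∀ x : E3, ρ (0, x) = μ x) :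
    -- (∂_t + ṽ·∇)ṽ = −∇p̃ + (1/2)Δṽ on (0,T)×ℝ³ (componentwise), ṽ = ∇u(T−·,·)
    (∀ t ∈ Ioo (0:ℝ) T, ∀ x : E3, ∀ i : Fin 3,
      dt1 (fun q => dx1 i u (T - q.1, q.2)) (t, x)
        + (∑ j, dx1 j u (T - t, x) * dx1 j (fun q => dx1 i u (T - q.1, q.2)) (t, x))
        = - dx1 i p (T - t, x)
          + (1/2) * lap1 (fun q => dx1 i u (T - q.1, q.2)) (t, x)) ∧
    -- ∂_t ρ̃ + ∇·(ρ̃ ṽ) + (1/2)Δρ̃ = 0 on (0,T)×ℝ³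
    (∀ t ∈ Ioo (0:ℝ) T, ∀ x : E3,
      dt1 (fun q => ρ (T - q.1, q.2)) (t, x)
        + (∑ i, dx1 i (fun q => ρ (T - q.1, q.2) * dx1 i u (T - q.1, q.2)) (t, x))
        + (1/2) * lap1 (fun q => ρ (T - q.1, q.2)) (t, x) = 0) ∧
    -- ṽ(0,x) = ∇h(x) (componentwise)
    (∀ x : E3, ∀ i : Fin 3,
      dx1 i u (T - 0, x) = fderiv ℝ h x (EuclideanSpace.single i 1)) ∧
    -- ρ̃(T,x) = μ(x)
    (∀ x : E3, ρ (T - T, x) = μ x) := by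
  have hrev : ∀ t ∈ Ioo (0:ℝ) T, T - t ∈ Ioo (0:ℝ) T := fun t ht =>
    ⟨by linarith [ht.2], by linarith [ht.1]⟩
  refine ⟨?_, ?_, ?_, ?_⟩
  · intro t ht x i
    have hs := hrev t ht
    rw [aux_time (dx1 i u) T t x,
      aux_mixed (isOpen_Ioo.prod isOpen_univ) hu2 (mk_mem_prod hs (mem_univ x)) i]
    have e : (fun y => dt1 u (T - t, y)) = fun y =>
        (1/2) * (∑ j, (dx1 j u (T - t, y))^2) - (1/2) * lap1 u (T - t, y) + p (T - t, y) := by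
      funext y
      linarith [hHJB (T - t) hs y]
    have m := aux_main (hu3 _ hs) (hp (T - t)) (fun j => EuclideanSpace.single j 1)
      (EuclideanSpace.single i 1) x
    have m' : dx1 i (dt1 u) (T - t, x) =
        (∑ j, dx1 j u (T - t, x) * dx1 j (fun q => dx1 i u (T - q.1, q.2)) (t, x))
        - (1/2) * lap1 (fun q => dx1 i u (T - q.1, q.2)) (t, x) + dx1 i p (T - t, x) := by
      refine Eq.trans ?_ m
      exact congrArg (fun F => fderiv ℝ F x (EuclideanSpace.single i 1)) e
    rw [m']
    ring
  · intro t ht x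
    have hs := hrev t ht
    rw [aux_time ρ T t x]
    have m := hFPK (T - t) hs x
    have a : (∑ i, dx1 i (fun q => ρ (T - q.1, q.2) * dx1 i u (T - q.1, q.2)) (t, x))
      = ∑ i, dx1 i (fun q => ρ q * dx1 i u q) (T - t, x) := rfl
    have b : lap1 (fun q => ρ (T - q.1, q.2)) (t, x) = lap1 ρ (T - t, x) := rfl
    rw [a, b]
    linarith
  · intro x i
    simp only [dx1, sub_zero, huterm]
  · intro x
    rw [sub_self, hρ0]
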